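/- For every complex number q with |q| < 1, the sum over all nonnegative integers j of q^(j^2+j) / ((q;q)_j) equals the product over all positive integers j with j not congruent to 0, 1, or -1 modulo 5 of 1/(1 - q^j). Here (a;q)_j denotes the finite q-Pochhammer symbol ∏_{h=0}^{j-1} (1 - a q^h), with (a;q)_0 = 1. -/

import Mathlib

/-- The finite q-Pochhammer symbol `(a; q)_n = ∏_{h=0}^{n-1} (1 - a q^h)`. -/
noncomputable def qPoch (a q : ℂ) (n : ℕ) : ℂ := ∏ h ∈ Finset.range n, (1 - a * q ^ h)

/-! The argument is Bailey's. Iterating Bailey's lemma twice on the unit Bailey pair and letting the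
index tend to infinity gives
`∑_j q^(j²+sj) / (q;q)_j = (q;q)_∞⁻¹ ∑_r (-1)^r q^(2r²+2sr + r(r-1)/2)` for `s = 0, 1`.
The theta series on the right is summed by the Jacobi triple product in base `q^5`; for `s = 1` its
factors are the residue classes `0, 1, 4` modulo `5` of `(q;q)_∞`, leaving the classes `2` and `3`.

The two finite inputs, the q-Vandermonde sum behind Bailey's lemma and the finite triple product,
follow from one q-Pascal recurrence for sums `∑_r f r / ((q;q)_{A-r} (q;q)_{B+r})`. -/

open Filter Topology

section Choose

variable {R : Type*} [CommRing R] [BinomialRing R]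

lemma choose_two_add_one (r : R) : Ring.choose (r + 1) 2 = Ring.choose r 2 + r := by
  rw [Ring.choose_succ_succ, Ring.choose_one_right, add_comm]

lemma choose_two_neg (r : R) : Ring.choose (-r) 2 = Ring.choose r 2 + r := by
  rw [Ring.choose_neg, Nat.cast_ofNat, Int.negOnePow_even 2 even_two, one_smul,
    ← choose_two_add_one, Nat.cast_ofNat, add_sub_assoc, show (2 - 1 : R) = 1 by norm_num]

lemma two_mul_choose_two_add_self (r : R) : 2 * Ring.choose r 2 + r = r ^ 2 := by
  have h := Ring.descPochhammer_eq_factorial_smul_choose r 2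
  simp only [descPochhammer_succ_right, descPochhammer_zero, Polynomial.smeval_mul,
    Polynomial.smeval_sub, Polynomial.smeval_one, Polynomial.smeval_X, Polynomial.smeval_natCast,
    Nat.factorial_two, two_nsmul] at h
  simp only [pow_zero, one_smul, pow_one, zero_nsmul, sub_zero, one_mul] at h
  linear_combination -h

end Choose

section Pochhammer

variable {q : ℂ}

lemma qPoch_succ (a q : ℂ) (n : ℕ) : qPoch a q (n + 1) = qPoch a q n * (1 - a * q ^ n) :=
  Finset.prod_range_succ _ _

lemma qPoch_ne_zero {a : ℂ} (ha : ∀ h, a * q ^ h ≠ 1) (n : ℕ) : qPoch a q n ≠ 0 :=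
  Finset.prod_ne_zero_iff.mpr fun h _ ↦ sub_ne_zero.mpr (ha h).symm

lemma qPoch_mul (a q : ℂ) (m n : ℕ) :
    qPoch a q (m * n) = ∏ i ∈ Finset.range m, qPoch (a * q ^ i) (q ^ m) n := by
  induction n with
  | zero => simp [qPoch]
  | succ n ih =>
    rw [mul_add_one, qPoch, Finset.prod_range_add, ← qPoch, ih, ← Finset.prod_mul_distrib]
    refine Finset.prod_congr rfl fun i _ ↦ ?_
    rw [qPoch_succ, ← pow_mul, mul_assoc a, ← pow_add, add_comm i]

lemma one_sub_zpow_ne_zero {K : Type*} [DivisionRing K] {q : K} (hq : ¬IsOfFinOrder q) {n : ℤ}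
    (hn : 0 < n) : 1 - q ^ n ≠ 0 := by
  lift n to ℕ using hn.le
  rw [zpow_natCast, sub_ne_zero]
  exact fun h ↦ hq (isOfFinOrder_iff_pow_eq_one.mpr ⟨n, by exact_mod_cast hn, h.symm⟩)

lemma qPoch_self_ne_zero (hq : ¬IsOfFinOrder q) (n : ℕ) : qPoch q q n ≠ 0 :=
  qPoch_ne_zero (fun h hh ↦ hq <|
    isOfFinOrder_iff_pow_eq_one.mpr ⟨h + 1, h.succ_pos, by rwa [pow_succ']⟩) n

/-- The reciprocal `1 / (q; q)_n`, extended by `0` to negative `n` so that the recurrence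
`qPochInv_sub_one` holds for all integers and sums over `ℤ` truncate themselves. -/
noncomputable def qPochInv (q : ℂ) : ℤ → ℂ
  | .ofNat n => (qPoch q q n)⁻¹
  | .negSucc _ => 0

@[simp]
lemma qPochInv_natCast (q : ℂ) (n : ℕ) : qPochInv q n = (qPoch q q n)⁻¹ := rfl

@[simp]
lemma qPochInv_zero (q : ℂ) : qPochInv q 0 = 1 := by
  simpa [qPoch] using qPochInv_natCast q 0

lemma qPochInv_of_neg (q : ℂ) {n : ℤ} (hn : n < 0) : qPochInv q n = 0 := by
  obtain ⟨m, rfl⟩ := Int.eq_negSucc_of_lt_zero hn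
  rfl

lemma qPochInv_sub_one (hq : ¬IsOfFinOrder q) (n : ℤ) :
    qPochInv q (n - 1) = (1 - q ^ n) * qPochInv q n := by
  rcases lt_trichotomy n 0 with hn | rfl | hn
  · rw [qPochInv_of_neg q hn, qPochInv_of_neg q (by lia), mul_zero]
  · simp [qPochInv_of_neg]
  · obtain ⟨m, rfl⟩ : ∃ m : ℕ, n = (m + 1 : ℕ) := ⟨(n - 1).toNat, by lia⟩
    rw [Nat.cast_succ, add_sub_cancel_right, ← Nat.cast_succ, qPochInv_natCast, qPochInv_natCast,
      qPoch_succ, ← pow_succ', ← zpow_natCast, mul_inv, mul_left_comm,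
      mul_inv_cancel₀ (one_sub_zpow_ne_zero hq hn), mul_one]

lemma one_sub_zpow_add_mul_qPochInv (hq : ¬IsOfFinOrder q) (hq0 : q ≠ 0) (m n : ℤ) :
    (1 - q ^ (m + n)) * (qPochInv q m * qPochInv q n) =
      qPochInv q (m - 1) * qPochInv q n + q ^ m * (qPochInv q m * qPochInv q (n - 1)) := by
  rw [qPochInv_sub_one hq m, qPochInv_sub_one hq n, zpow_add₀ hq0]
  ring

lemma summable_mul_qPochInv (q : ℂ) (f : ℤ → ℂ) (A B : ℤ) :
    Summable fun r ↦ f r * qPochInv q (A - r) * qPochInv q (B + r) := by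
  refine summable_of_hasFiniteSupport ((Set.finite_Icc (-B) A).subset fun r hr ↦ ?_)
  by_contra hAB
  rw [Set.mem_Icc, not_and_or] at hAB
  rcases hAB with h | h
  · exact hr (by simp [qPochInv_of_neg q (show B + r < 0 by lia)])
  · exact hr (by simp [qPochInv_of_neg q (show A - r < 0 by lia)])

lemma tsum_mul_qPochInv_zero_zero (q : ℂ) (f : ℤ → ℂ) :
    ∑' r, f r * qPochInv q (0 - r) * qPochInv q (0 + r) = f 0 := by
  rw [tsum_eq_single 0]
  · simp
  · intro r hr
    rcases hr.lt_or_gt with h | h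
    · simp [qPochInv_of_neg q h]
    · simp [qPochInv_of_neg q (show -r < 0 by lia)]

lemma tsum_mul_qPochInv_of_neg (q : ℂ) (f : ℤ → ℂ) {A B : ℤ} (h : A + B < 0) :
    ∑' r, f r * qPochInv q (A - r) * qPochInv q (B + r) = 0 := by
  refine (tsum_congr fun r ↦ ?_).trans tsum_zero
  rcases lt_or_ge (A - r) 0 with hr | hr
  · simp [qPochInv_of_neg q hr]
  · simp [qPochInv_of_neg q (show B + r < 0 by lia)]

-- Split `1 - q^(A+B+1)` by the q-Pascal rule and shift `r` in one of the two parts.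
lemma tsum_mul_qPochInv_add_one (hq : ¬IsOfFinOrder q) (hq0 : q ≠ 0) (f : ℤ → ℂ) (A B : ℤ) :
    (1 - q ^ (A + B + 1)) * ∑' r, f r * qPochInv q (A + 1 - r) * qPochInv q (B + r) =
      ∑' r, (f r + q ^ (A - r) * f (r + 1)) * qPochInv q (A - r) * qPochInv q (B + r) := by
  set u : ℤ → ℂ :=
    fun r ↦ q ^ (A + 1 - r) * f r * qPochInv q (A + 1 - r) * qPochInv q (B - 1 + r) with hu
  have u_succ (r : ℤ) :
      u (r + 1) = q ^ (A - r) * f (r + 1) * qPochInv q (A - r) * qPochInv q (B + r) := by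
    simp only [hu, add_sub_add_right_eq_sub, show B - 1 + (r + 1) = B + r by ring]
  have split (r : ℤ) :
      (1 - q ^ (A + B + 1)) * (f r * qPochInv q (A + 1 - r) * qPochInv q (B + r)) =
        f r * qPochInv q (A - r) * qPochInv q (B + r) + u r := by
    have h := one_sub_zpow_add_mul_qPochInv hq hq0 (A + 1 - r) (B + r)
    rw [show A + 1 - r + (B + r) = A + B + 1 by ring, show A + 1 - r - 1 = A - r by ring,
      show B + r - 1 = B - 1 + r by ring] at h
    linear_combination f r * h
  rw [← tsum_mul_left, tsum_congr split,
    (summable_mul_qPochInv q f A B).tsum_add (summable_mul_qPochInv q _ _ _),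
    ← (Equiv.addRight (1 : ℤ)).tsum_eq u]
  simp only [Equiv.coe_addRight, u_succ, add_mul]
  exact ((summable_mul_qPochInv q f A B).tsum_add (summable_mul_qPochInv q _ _ _)).symm

end Pochhammer

section FiniteTheta

variable {q z : ℂ}

/-- The finite theta sum
`∑_r (-z)^r q^(r(r-1)/2) / ((q; q)_{A-r} (q; q)_{B+r})`, over `-B ≤ r ≤ A`. -/
noncomputable def finiteTheta (q z : ℂ) (A B : ℤ) : ℂ :=
  ∑' r : ℤ, (-z) ^ r * q ^ Ring.choose r 2 * qPochInv q (A - r) * qPochInv q (B + r)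

lemma finiteTheta_swap (hq0 : q ≠ 0) (hz : z ≠ 0) (A B : ℤ) :
    finiteTheta q z A B = finiteTheta q (q / z) B A := by
  rw [finiteTheta, ← (Equiv.neg ℤ).tsum_eq]
  refine tsum_congr fun r ↦ ?_
  rw [Equiv.neg_apply, choose_two_neg, zpow_add₀ hq0, sub_neg_eq_add, ← sub_eq_add_neg,
    show -(q / z) = (-z)⁻¹ * q by field_simp, mul_zpow, inv_zpow']
  ring

lemma finiteTheta_add_one_left (hq : ¬IsOfFinOrder q) (hq0 : q ≠ 0) (hz : z ≠ 0) (A B : ℤ) :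
    (1 - q ^ (A + B + 1)) * finiteTheta q z (A + 1) B = (1 - z * q ^ A) * finiteTheta q z A B := by
  rw [finiteTheta, tsum_mul_qPochInv_add_one hq hq0, finiteTheta, ← tsum_mul_left]
  refine tsum_congr fun r ↦ ?_
  rw [choose_two_add_one, zpow_add₀ hq0, zpow_sub₀ hq0, zpow_add_one₀ (neg_ne_zero.mpr hz)]
  field_simp
  ring

lemma finiteTheta_add_one_right (hq : ¬IsOfFinOrder q) (hq0 : q ≠ 0) (hz : z ≠ 0) (A B : ℤ) :
    (1 - q ^ (A + B + 1)) * finiteTheta q z A (B + 1) =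
      (1 - q / z * q ^ B) * finiteTheta q z A B := by
  rw [finiteTheta_swap hq0 hz, finiteTheta_swap hq0 hz A B, add_comm A B]
  exact finiteTheta_add_one_left hq hq0 (div_ne_zero hq0 hz) B A

lemma finite_jacobi_triple_product (hq : ¬IsOfFinOrder q) (hq0 : q ≠ 0) (hz : z ≠ 0) (A B : ℕ) :
    finiteTheta q z A B = qPoch z q A * qPoch (q / z) q B * qPochInv q (A + B) := by
  have hne (A B : ℕ) : 1 - q ^ (A + B + 1 : ℤ) ≠ 0 := one_sub_zpow_ne_zero hq (by positivity)
  have hinv (A B : ℕ) : qPochInv q (A + B) =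
      (1 - q ^ (A + B + 1 : ℤ)) * qPochInv q (A + B + 1) := by
    simpa using qPochInv_sub_one hq (A + B + 1)
  induction A with
  | zero =>
    induction B with
    | zero =>
      simpa [qPoch, finiteTheta] using
        tsum_mul_qPochInv_zero_zero q fun r ↦ (-z) ^ r * q ^ Ring.choose r 2
    | succ B ih =>
      apply mul_left_cancel₀ (hne 0 B)
      rw [Nat.cast_succ, finiteTheta_add_one_right hq hq0 hz, ih, qPoch_succ, ← add_assoc, hinv,
        zpow_natCast]
      ring
  | succ A ih =>
    apply mul_left_cancel₀ (hne A B)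
    rw [Nat.cast_succ, finiteTheta_add_one_left hq hq0 hz, ih, qPoch_succ, hinv,
      add_right_comm (A : ℤ) B, zpow_natCast]
    ring

end FiniteTheta

section Bailey

variable {q : ℂ} {s : ℤ} {α β : ℤ → ℂ}

/-- The sum `∑_k q^(k(k+m)) / ((q; q)_k (q; q)_{k+m} (q; q)_{A-k})`, which the q-Vandermonde
summation evaluates to `1 / ((q; q)_A (q; q)_{A+m})`. -/
noncomputable def vandermondeSum (q : ℂ) (A m : ℤ) : ℂ :=
  ∑' k : ℤ, q ^ (k * (k + m)) * qPochInv q (k + m) * qPochInv q (A - k) * qPochInv q k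

lemma vandermondeSum_add_one (hq : ¬IsOfFinOrder q) (hq0 : q ≠ 0) (A m : ℤ) :
    (1 - q ^ (A + 1)) * vandermondeSum q (A + 1) m =
      vandermondeSum q A m + q ^ (A + m + 1) * vandermondeSum q A (m + 1) := by
  have hexp (k : ℤ) : q ^ (A - k) * q ^ ((k + 1) * (k + 1 + m)) =
      q ^ (A + m + 1) * q ^ (k * (k + (m + 1))) := by
    rw [← zpow_add₀ hq0, ← zpow_add₀ hq0]
    congr 1
    ring
  have h := tsum_mul_qPochInv_add_one hq hq0 (fun k ↦ q ^ (k * (k + m)) * qPochInv q (k + m)) A 0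
  have hsum (f : ℤ → ℂ) := summable_mul_qPochInv q f A 0
  simp only [add_zero, zero_add] at h hsum
  rw [vandermondeSum, h, vandermondeSum, vandermondeSum, ← tsum_mul_left,
    ← (hsum _).tsum_add ((hsum _).mul_left _)]
  refine tsum_congr fun k ↦ ?_
  rw [← mul_assoc (q ^ (A - k)), hexp, add_assoc k, add_comm 1 m]
  ring

lemma vandermondeSum_eq (hq : ¬IsOfFinOrder q) (hq0 : q ≠ 0) (A m : ℤ) :
    vandermondeSum q A m = qPochInv q A * qPochInv q (A + m) := by
  rcases lt_or_ge A 0 with hA | hA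
  · simpa [vandermondeSum, qPochInv_of_neg q hA] using tsum_mul_qPochInv_of_neg q
      (fun k ↦ q ^ (k * (k + m)) * qPochInv q (k + m)) (show A + 0 < 0 by lia)
  lift A to ℕ using hA
  induction A generalizing m with
  | zero =>
    simpa [vandermondeSum] using tsum_mul_qPochInv_zero_zero q
      fun k ↦ q ^ (k * (k + m)) * qPochInv q (k + m)
  | succ A ih =>
    apply mul_left_cancel₀ (one_sub_zpow_ne_zero hq (show 0 < (A + 1 : ℤ) by positivity))
    have hA := qPochInv_sub_one hq (A + 1)
    have hAm := qPochInv_sub_one hq (A + 1 + m)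
    rw [add_sub_cancel_right] at hA
    rw [add_right_comm, add_sub_cancel_right] at hAm
    rw [Nat.cast_succ, vandermondeSum_add_one hq hq0, ih, ih, hAm, hA,
      add_right_comm (A : ℤ) 1 m, ← add_assoc (A : ℤ) m]
    ring

/-- Bailey pairs relative to `a = q^s`, in bilateral form: `α` and `β` are indexed by `ℤ`, and
`β_L = ∑_r α_r / ((q; q)_{L-r} (q; q)_{L+s+r})`, a finite sum because `qPochInv` vanishes at
negative integers. For `α` supported on `r ≥ 0`, this is the classical relation multiplied by the
constant `1 / (q; q)_s`. -/
def IsBaileyPair (q : ℂ) (s : ℤ) (α β : ℤ → ℂ) : Prop :=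
  ∀ L, ∑' r, α r * qPochInv q (L - r) * qPochInv q (L + s + r) = β L

lemma tsum_zpow_mul_qPochInv (hq : ¬IsOfFinOrder q) (hq0 : q ≠ 0) (N r s : ℤ) :
    ∑' L : ℤ, q ^ (L ^ 2 + s * L) * qPochInv q (N - L) * qPochInv q (L - r) *
        qPochInv q (L + s + r) =
      q ^ (r ^ 2 + s * r) * qPochInv q (N - r) * qPochInv q (N + s + r) := by
  rw [← (Equiv.addRight r).tsum_eq]
  calc
    _ = ∑' k : ℤ, q ^ (r ^ 2 + s * r) * (q ^ (k * (k + (2 * r + s))) *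
          qPochInv q (k + (2 * r + s)) * qPochInv q (N - r - k) * qPochInv q k) := by
      refine tsum_congr fun k ↦ ?_
      rw [Equiv.coe_addRight, add_sub_cancel_right,
        show (k + r) ^ 2 + s * (k + r) = r ^ 2 + s * r + k * (k + (2 * r + s)) by ring,
        zpow_add₀ hq0 (r ^ 2 + s * r), show N - (k + r) = N - r - k by ring,
        show k + r + s + r = k + (2 * r + s) by ring]
      ring
    _ = _ := by
      rw [tsum_mul_left, ← vandermondeSum, vandermondeSum_eq hq hq0,
        show N - r + (2 * r + s) = N + s + r by ring, mul_assoc]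

lemma IsBaileyPair.bailey_lemma (hq : ¬IsOfFinOrder q) (hq0 : q ≠ 0) (h : IsBaileyPair q s α β) :
    IsBaileyPair q s (fun r ↦ q ^ (r ^ 2 + s * r) * α r)
      (fun N ↦ ∑' L, q ^ (L ^ 2 + s * L) * β L * qPochInv q (N - L)) := by
  intro N
  set F : ℤ → ℤ → ℂ := fun r L ↦ α r * (q ^ (L ^ 2 + s * L) * qPochInv q (N - L) *
    qPochInv q (L - r) * qPochInv q (L + s + r)) with hF
  have hfin : Summable (Function.uncurry F) := by
    have hI := Set.finite_Icc (-(N + s)) N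
    refine summable_of_hasFiniteSupport ((hI.prod hI).subset ?_)
    rintro ⟨r, L⟩ hrL
    by_contra hI
    have hneg : N - L < 0 ∨ L - r < 0 ∨ L + s + r < 0 := by
      simp only [Set.mem_prod, Set.mem_Icc] at hI
      lia
    rcases hneg with h | h | h <;> exact hrL (by simp [hF, qPochInv_of_neg q h])
  calc
    _ = ∑' r, ∑' L, F r L := by
      refine tsum_congr fun r ↦ ?_
      rw [tsum_mul_left, tsum_zpow_mul_qPochInv hq hq0]
      ring
    _ = ∑' L, ∑' r, F r L := hfin.tsum_comm.symm
    _ = _ := by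
      refine tsum_congr fun L ↦ ?_
      rw [← h L, mul_right_comm, ← tsum_mul_left]
      refine tsum_congr fun r ↦ ?_
      ring

lemma isBaileyPair_unit (hq : ¬IsOfFinOrder q) (hq0 : q ≠ 0) (hs0 : 0 ≤ s) (hs1 : s ≤ 1) :
    IsBaileyPair q s (fun r ↦ (-1) ^ r * q ^ Ring.choose r 2) (Pi.single 0 1) := by
  intro L
  change finiteTheta q 1 L (L + s) = _
  lift s to ℕ using hs0
  rcases lt_or_ge L 0 with hL | hL
  · rw [finiteTheta, tsum_mul_qPochInv_of_neg q _ (by lia), Pi.single_eq_of_ne hL.ne]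
  lift L to ℕ using hL
  rw [← Nat.cast_add, finite_jacobi_triple_product hq hq0 one_ne_zero]
  cases L with
  | zero => simpa [qPoch] using mul_inv_cancel₀ (qPoch_self_ne_zero hq s)
  | succ L =>
    rw [Pi.single_eq_of_ne (by positivity)]
    simp [qPoch, Finset.prod_range_succ']

lemma isBaileyPair_qPochInv (hq : ¬IsOfFinOrder q) (hq0 : q ≠ 0) (hs0 : 0 ≤ s) (hs1 : s ≤ 1) :
    IsBaileyPair q s (fun r ↦ q ^ (r ^ 2 + s * r) * ((-1) ^ r * q ^ Ring.choose r 2))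
      (qPochInv q) := by
  intro N
  rw [(isBaileyPair_unit hq hq0 hs0 hs1).bailey_lemma hq hq0 N]
  beta_reduce
  rw [tsum_eq_single 0]
  · simp
  · intro L hL
    simp [hL]

end Bailey

section Limits

variable {q z : ℂ} {s : ℤ} {α β : ℤ → ℂ}

/-- The infinite q-Pochhammer symbol `(a; q)_∞ = ∏_{h ≥ 0} (1 - a q^h)`, meaningful for
`‖q‖ < 1`. -/
noncomputable def qPochInf (a q : ℂ) : ℂ := ∏' h : ℕ, (1 - a * q ^ h)

lemma norm_pow_lt_one_of_ne_zero {K : Type*} [NormedDivisionRing K] {q : K} (hq : ‖q‖ < 1) {n : ℕ}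
    (hn : n ≠ 0) : ‖q ^ n‖ < 1 := by
  simpa only [norm_pow] using pow_lt_one₀ (norm_nonneg q) hq hn

lemma summable_norm_neg_mul_pow {K : Type*} [NormedDivisionRing K] {q : K} (a : K)
    (hq : ‖q‖ < 1) : Summable fun h : ℕ ↦ ‖-(a * q ^ h)‖ := by
  simpa only [norm_neg, norm_mul, norm_pow] using
    (summable_geometric_of_lt_one (norm_nonneg q) hq).mul_left ‖a‖

lemma hasProd_qPochInf (a : ℂ) (hq : ‖q‖ < 1) :
    HasProd (fun h : ℕ ↦ 1 - a * q ^ h) (qPochInf a q) := by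
  simpa only [sub_eq_add_neg, qPochInf] using
    (multipliable_one_add_of_summable (summable_norm_neg_mul_pow a hq)).hasProd

lemma tendsto_qPoch (a : ℂ) (hq : ‖q‖ < 1) : Tendsto (qPoch a q) atTop (𝓝 (qPochInf a q)) :=
  (hasProd_qPochInf a hq).tendsto_prod_nat

lemma qPochInf_ne_zero {a : ℂ} (hq : ‖q‖ < 1) (ha : ∀ h, a * q ^ h ≠ 1) : qPochInf a q ≠ 0 := by
  have hne (h : ℕ) : 1 + -(a * q ^ h) ≠ 0 := by
    simpa only [← sub_eq_add_neg] using sub_ne_zero.mpr (ha h).symm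
  simpa only [sub_eq_add_neg, qPochInf] using
    tprod_one_add_ne_zero_of_summable hne (summable_norm_neg_mul_pow a hq)

lemma qPochInf_ne_zero_of_norm_lt_one {a : ℂ} (ha : ‖a‖ < 1) (hq : ‖q‖ < 1) :
    qPochInf a q ≠ 0 := by
  refine qPochInf_ne_zero hq fun h hh ↦ ?_
  have hlt : ‖a * q ^ h‖ < 1 := by
    rw [norm_mul, norm_pow]
    exact mul_lt_one_of_nonneg_of_lt_one_left (norm_nonneg a) ha (pow_le_one₀ (norm_nonneg q) hq.le)
  simp [hh] at hlt

lemma qPochInf_eq_prod (a : ℂ) (hq : ‖q‖ < 1) {m : ℕ} (hm : m ≠ 0) :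
    qPochInf a q = ∏ i ∈ Finset.range m, qPochInf (a * q ^ i) (q ^ m) := by
  have hqm : ‖q ^ m‖ < 1 := norm_pow_lt_one_of_ne_zero hq hm
  have hmul : Tendsto (fun n ↦ m * n) atTop atTop :=
    tendsto_id.const_mul_atTop' (Nat.pos_of_ne_zero hm)
  refine tendsto_nhds_unique ((tendsto_qPoch a hq).comp hmul) ?_
  simp only [Function.comp_def, qPoch_mul]
  exact tendsto_finsetProd _ fun i _ ↦ tendsto_qPoch _ hqm

lemma not_isOfFinOrder_of_norm_lt_one {K : Type*} [NormedDivisionRing K] {q : K} (hq : ‖q‖ < 1) :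
    ¬IsOfFinOrder q :=
  fun h ↦ hq.ne h.norm_eq_one

lemma tendsto_qPochInv (hq : ‖q‖ < 1) :
    Tendsto (qPochInv q) atTop (𝓝 (qPochInf q q)⁻¹) := by
  rw [← Nat.map_cast_int_atTop, tendsto_map'_iff]
  exact (tendsto_qPoch q hq).inv₀ (qPochInf_ne_zero_of_norm_lt_one hq hq)

lemma exists_norm_qPochInv_le (hq : ‖q‖ < 1) : ∃ C, ∀ n, ‖qPochInv q n‖ ≤ C := by
  obtain ⟨C, hC⟩ := (Metric.isBounded_range_of_tendsto (fun n : ℕ ↦ qPochInv q n)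
    ((tendsto_qPochInv hq).comp tendsto_natCast_atTop_atTop)).exists_norm_le
  refine ⟨C, fun n ↦ ?_⟩
  rcases lt_or_ge n 0 with hn | hn
  · rw [qPochInv_of_neg q hn, norm_zero]
    exact (norm_nonneg _).trans (hC _ ⟨0, rfl⟩)
  · lift n to ℕ using hn
    exact hC _ ⟨n, rfl⟩

lemma tendsto_tsum_mul_of_norm_le {R ι κ : Type*} [NormedRing R] [CompleteSpace R] {l : Filter κ}
    {f : ι → R} {g : κ → ι → R} {c : R} {C : ℝ} (hf : Summable fun i ↦ ‖f i‖)
    (hg : ∀ i, Tendsto (g · i) l (𝓝 c)) (hC : ∀ᶠ n in l, ∀ i, ‖g n i‖ ≤ C) :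
    Tendsto (fun n ↦ ∑' i, f i * g n i) l (𝓝 ((∑' i, f i) * c)) := by
  rw [← hf.of_norm.tsum_mul_right]
  refine tendsto_tsum_of_dominated_convergence (hf.mul_right C)
    (fun i ↦ (hg i).const_mul _) (hC.mono fun n hn i ↦ (norm_mul_le _ _).trans ?_)
  gcongr
  exact hn i

lemma tendsto_tsum_mul_qPochInv (hq : ‖q‖ < 1) {f : ℤ → ℂ} (hf : Summable fun r ↦ ‖f r‖) :
    Tendsto (fun N : ℤ ↦ ∑' r, f r * qPochInv q (N - r)) atTop
      (𝓝 ((∑' r, f r) * (qPochInf q q)⁻¹)) := by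
  obtain ⟨C, hC⟩ := exists_norm_qPochInv_le hq
  exact tendsto_tsum_mul_of_norm_le hf
    (fun r ↦ (tendsto_qPochInv hq).comp (tendsto_atTop_add_const_right _ (-r) tendsto_id))
    (.of_forall fun _ _ ↦ hC _)

lemma tendsto_tsum_mul_qPochInv_mul_qPochInv (hq : ‖q‖ < 1) {f : ℤ → ℂ}
    (hf : Summable fun r ↦ ‖f r‖) (s : ℤ) :
    Tendsto (fun N : ℤ ↦ ∑' r, f r * qPochInv q (N - r) * qPochInv q (N + s + r)) atTop
      (𝓝 ((∑' r, f r) * ((qPochInf q q)⁻¹ * (qPochInf q q)⁻¹))) := by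
  obtain ⟨C, hC⟩ := exists_norm_qPochInv_le hq
  simp only [mul_assoc, add_assoc]
  refine tendsto_tsum_mul_of_norm_le (C := C * C) hf (fun r ↦ ?_)
    (.of_forall fun _ _ ↦ norm_mul_le_of_le (hC _) (hC _))
  exact ((tendsto_qPochInv hq).comp (tendsto_atTop_add_const_right _ (-r) tendsto_id)).mul
    ((tendsto_qPochInv hq).comp (tendsto_atTop_add_const_right _ (s + r) tendsto_id))

lemma summable_norm_pow_mul_zpow_choose {K : Type*} [NormedField K] {q : K} (z : K)
    (hq : ‖q‖ < 1) (hq0 : q ≠ 0) :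
    Summable fun n : ℕ ↦ ‖z ^ n * q ^ Ring.choose (n : ℤ) 2‖ := by
  have hlim : Tendsto (fun n : ℕ ↦ ‖z‖ * ‖q‖ ^ n) atTop (𝓝 0) := by
    simpa using (tendsto_pow_atTop_nhds_zero_of_lt_one (norm_nonneg q) hq).const_mul ‖z‖
  refine summable_of_ratio_norm_eventually_le (r := 1 / 2) (by norm_num) ?_
  filter_upwards [hlim.eventually_le_const (show (0 : ℝ) < 1 / 2 by norm_num)] with n hn
  rw [norm_norm, norm_norm, Nat.cast_succ, choose_two_add_one, zpow_add₀ hq0, zpow_natCast,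
    pow_succ']
  calc
    _ = ‖z‖ * ‖q‖ ^ n * ‖z ^ n * q ^ Ring.choose (n : ℤ) 2‖ := by
      simp only [norm_mul, norm_pow]
      ring
    _ ≤ _ := by gcongr

lemma summable_norm_zpow_mul_zpow_choose {K : Type*} [NormedField K] {q : K} (z : K)
    (hq : ‖q‖ < 1) (hq0 : q ≠ 0) :
    Summable fun r : ℤ ↦ ‖z ^ r * q ^ Ring.choose r 2‖ := by
  refine .of_nat_of_neg (by simpa using summable_norm_pow_mul_zpow_choose z hq hq0) ?_
  refine (summable_norm_pow_mul_zpow_choose (q / z) hq hq0).congr fun n ↦ ?_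
  rw [choose_two_neg, zpow_add₀ hq0, zpow_neg, zpow_natCast, zpow_natCast, div_pow]
  congr 1
  ring

lemma jacobi_triple_product (hq : ‖q‖ < 1) (hq0 : q ≠ 0) (hz : z ≠ 0) :
    ∑' r : ℤ, (-z) ^ r * q ^ Ring.choose r 2 =
      qPochInf q q * qPochInf z q * qPochInf (q / z) q := by
  have hroot := not_isOfFinOrder_of_norm_lt_one hq
  have hsum := summable_norm_zpow_mul_zpow_choose (-z) hq hq0
  have hseries := (tendsto_tsum_mul_qPochInv_mul_qPochInv hq hsum 0).comp
    tendsto_natCast_atTop_atTop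
  have hprod : Tendsto (fun n : ℕ ↦ finiteTheta q z n n) atTop
      (𝓝 (qPochInf z q * qPochInf (q / z) q * (qPochInf q q)⁻¹)) := by
    simp_rw [finite_jacobi_triple_product hroot hq0 hz]
    refine ((tendsto_qPoch z hq).mul (tendsto_qPoch _ hq)).mul ((tendsto_qPochInv hq).comp ?_)
    exact tendsto_natCast_atTop_atTop.atTop_add_atTop tendsto_natCast_atTop_atTop
  simp only [Function.comp_def, add_zero] at hseries
  have h := tendsto_nhds_unique hseries hprod
  have hne := qPochInf_ne_zero_of_norm_lt_one hq hq
  field_simp at h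
  exact h

lemma IsBaileyPair.tsum_eq (h : IsBaileyPair q s α β) (hq : ‖q‖ < 1) (hq0 : q ≠ 0)
    (hα : Summable fun r ↦ ‖q ^ (r ^ 2 + s * r) * α r‖)
    (hβ : Summable fun L ↦ ‖q ^ (L ^ 2 + s * L) * β L‖) :
    ∑' L, q ^ (L ^ 2 + s * L) * β L = (∑' r, q ^ (r ^ 2 + s * r) * α r) / qPochInf q q := by
  have hlemma := h.bailey_lemma (not_isOfFinOrder_of_norm_lt_one hq) hq0
  have hlim := tendsto_tsum_mul_qPochInv_mul_qPochInv hq hα s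
  rw [funext hlemma] at hlim
  have heq := tendsto_nhds_unique (tendsto_tsum_mul_qPochInv hq hβ) hlim
  have hne := qPochInf_ne_zero_of_norm_lt_one hq hq
  field_simp at heq ⊢
  exact heq

end Limits

section RogersRamanujan

variable {q : ℂ}

lemma tsum_int_mul_qPochInv (q : ℂ) (f : ℤ → ℂ) :
    ∑' n, f n * qPochInv q n = ∑' n : ℕ, f n / qPoch q q n := by
  refine (Nat.cast_injective.tsum_eq fun n hn ↦ ?_).symm
  by_contra hneg
  have hlt : n < 0 := not_le.mp fun h ↦ hneg ⟨n.toNat, Int.toNat_of_nonneg h⟩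
  exact hn (by simp [qPochInv_of_neg q hlt])

lemma zpow_sq_add_mul {K : Type*} [Field K] {q : K} (hq0 : q ≠ 0) (s : ℕ) (r : ℤ) :
    q ^ (r ^ 2 + s * r) = (q ^ (s + 1)) ^ r * (q ^ 2) ^ Ring.choose r 2 := by
  simp only [← zpow_natCast, ← zpow_mul, ← zpow_add₀ hq0]
  congr 1
  push_cast
  linear_combination -two_mul_choose_two_add_self r

lemma zpow_sq_add_mul_mul_self {K : Type*} [Field K] {q : K} (hq0 : q ≠ 0) (s : ℕ) (r : ℤ) :
    q ^ (r ^ 2 + s * r) * (q ^ (r ^ 2 + s * r) * ((-1) ^ r * q ^ Ring.choose r 2)) =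
      (-q ^ (2 * s + 2)) ^ r * (q ^ 5) ^ Ring.choose r 2 := by
  rw [neg_eq_neg_one_mul (q ^ _), mul_zpow, zpow_sq_add_mul hq0]
  simp only [mul_left_comm _ ((-1 : K) ^ r), mul_assoc ((-1 : K) ^ r)]
  simp only [← zpow_natCast, ← zpow_mul, ← zpow_add₀ hq0]
  congr 2
  push_cast
  ring

lemma summable_norm_zpow_mul_qPochInv (hq : ‖q‖ < 1) (hq0 : q ≠ 0) (s : ℕ) :
    Summable fun n : ℤ ↦ ‖q ^ (n ^ 2 + s * n) * qPochInv q n‖ := by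
  have hq2 : ‖q ^ 2‖ < 1 := norm_pow_lt_one_of_ne_zero hq two_ne_zero
  obtain ⟨C, hC⟩ := exists_norm_qPochInv_le hq
  refine .of_nonneg_of_le (fun _ ↦ norm_nonneg _) (fun n ↦ ?_)
    ((summable_norm_zpow_mul_zpow_choose (q ^ (s + 1)) hq2 (pow_ne_zero 2 hq0)).mul_right C)
  rw [norm_mul, zpow_sq_add_mul hq0]
  gcongr
  exact hC n

lemma tsum_pow_div_qPoch (hq : ‖q‖ < 1) (hq0 : q ≠ 0) {s : ℕ} (hs : s ≤ 1) :
    ∑' j : ℕ, q ^ (j ^ 2 + s * j) / qPoch q q j =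
      qPochInf (q ^ 5) (q ^ 5) * qPochInf (q ^ (2 * s + 2)) (q ^ 5) *
        qPochInf (q ^ 5 / q ^ (2 * s + 2)) (q ^ 5) / qPochInf q q := by
  have hq5 : ‖q ^ 5‖ < 1 := norm_pow_lt_one_of_ne_zero hq (by norm_num)
  have hpair := isBaileyPair_qPochInv (s := s) (not_isOfFinOrder_of_norm_lt_one hq) hq0
    (by positivity) (by exact_mod_cast hs)
  have hα := summable_norm_zpow_mul_zpow_choose (-q ^ (2 * s + 2)) hq5 (pow_ne_zero 5 hq0)
  simp only [← zpow_sq_add_mul_mul_self hq0] at hα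
  calc
    _ = ∑' n : ℤ, q ^ (n ^ 2 + s * n) * qPochInv q n := by
      rw [tsum_int_mul_qPochInv]
      norm_cast
    _ = (∑' r : ℤ, (-q ^ (2 * s + 2)) ^ r * (q ^ 5) ^ Ring.choose r 2) / qPochInf q q := by
      simp only [hpair.tsum_eq hq hq0 hα (summable_norm_zpow_mul_qPochInv hq hq0 s),
        zpow_sq_add_mul_mul_self hq0]
    _ = _ := by
      rw [jacobi_triple_product hq5 (pow_ne_zero 5 hq0) (pow_ne_zero _ hq0)]

lemma hasProd_inv_one_sub_pow_of_mod_eq (hq : ‖q‖ < 1) {k m : ℕ} (hk : 0 < k) (hkm : k < m) :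
    HasProd (fun j : {j : ℕ | j % m = k} ↦ (1 - q ^ (j : ℕ))⁻¹) (qPochInf (q ^ k) (q ^ m))⁻¹ := by
  have hqk : ‖q ^ k‖ < 1 := norm_pow_lt_one_of_ne_zero hq hk.ne'
  have hqm : ‖q ^ m‖ < 1 := norm_pow_lt_one_of_ne_zero hq (hk.trans hkm).ne'
  have hinj : Function.Injective fun n ↦ k + m * n := fun a b hab ↦
    Nat.eq_of_mul_eq_mul_left (hk.trans hkm) (Nat.add_left_cancel hab)
  have hrange : {j : ℕ | j % m = k} = Set.range fun n ↦ k + m * n := by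
    ext j
    refine ⟨?_, ?_⟩
    · rintro rfl
      exact ⟨j / m, Nat.mod_add_div j m⟩
    · rintro ⟨n, rfl⟩
      simp [Nat.mod_eq_of_lt hkm]
  rw [hrange, hinj.hasProd_range_iff (f := fun j ↦ (1 - q ^ j)⁻¹)]
  simpa only [Function.comp_def, pow_add, pow_mul] using
    (hasProd_qPochInf (q ^ k) hqm).inv₀ (qPochInf_ne_zero_of_norm_lt_one hqk hqm)

lemma tprod_inv_one_sub_pow_mod_five (hq : ‖q‖ < 1) :
    ∏' j : {j : ℕ // 0 < j ∧ j % 5 ≠ 0 ∧ j % 5 ≠ 1 ∧ j % 5 ≠ 4}, (1 - q ^ (j : ℕ))⁻¹ =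
      (qPochInf (q ^ 2) (q ^ 5))⁻¹ * (qPochInf (q ^ 3) (q ^ 5))⁻¹ := by
  have hset : {j : ℕ | 0 < j ∧ j % 5 ≠ 0 ∧ j % 5 ≠ 1 ∧ j % 5 ≠ 4} =
      {j | j % 5 = 2} ∪ {j | j % 5 = 3} := by
    ext j
    simp only [Set.mem_ofPred_eq, Set.mem_union]
    lia
  have hdisj : Disjoint {j : ℕ | j % 5 = 2} {j | j % 5 = 3} :=
    Set.disjoint_left.mpr fun j (h2 : j % 5 = 2) (h3 : j % 5 = 3) ↦ by lia
  have h := HasProd.mul_disjoint (f := fun j : ℕ ↦ (1 - q ^ j)⁻¹) hdisj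
    (hasProd_inv_one_sub_pow_of_mod_eq hq two_pos (by norm_num))
    (hasProd_inv_one_sub_pow_of_mod_eq hq three_pos (by norm_num))
  rw [← hset] at h
  exact h.tprod_eq

end RogersRamanujan

/-- The first Rogers–Ramanujan identity. -/
theorem rogers_ramanujan_first (q : ℂ) (hq : ‖q‖ < 1) :
    ∑' j : ℕ, q ^ (j ^ 2 + j) / qPoch q q j =
      ∏' j : {j : ℕ // 0 < j ∧ j % 5 ≠ 0 ∧ j % 5 ≠ 1 ∧ j % 5 ≠ 4},
        (1 - q ^ (j : ℕ))⁻¹ := by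
  have hq5 : ‖q ^ 5‖ < 1 := norm_pow_lt_one_of_ne_zero hq (by norm_num)
  have hne {k : ℕ} (hk : k ≠ 0) : qPochInf (q ^ k) (q ^ 5) ≠ 0 :=
    qPochInf_ne_zero_of_norm_lt_one (norm_pow_lt_one_of_ne_zero hq hk) hq5
  have hne1 : qPochInf q (q ^ 5) ≠ 0 := qPochInf_ne_zero_of_norm_lt_one hq hq5
  rw [tprod_inv_one_sub_pow_mod_five hq]
  rcases eq_or_ne q 0 with rfl | hq0
  · rw [tsum_eq_single 0 (by simp +contextual)]
    simp [qPoch, qPochInf]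
  have hdissect : qPochInf q q = qPochInf q (q ^ 5) * qPochInf (q ^ 2) (q ^ 5) *
      qPochInf (q ^ 3) (q ^ 5) * qPochInf (q ^ 4) (q ^ 5) * qPochInf (q ^ 5) (q ^ 5) := by
    simpa [Finset.prod_range_succ, ← pow_succ'] using
      qPochInf_eq_prod q hq (show 5 ≠ 0 by norm_num)
  calc
    _ = qPochInf (q ^ 5) (q ^ 5) * qPochInf (q ^ 4) (q ^ 5) * qPochInf q (q ^ 5) /
        qPochInf q q := by
      simpa [show q ^ 5 / q ^ 4 = q by field_simp] using tsum_pow_div_qPoch hq hq0 le_rfl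
    _ = _ := by
      rw [hdissect, ← mul_inv]
      field_simp [hne]
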